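/- Let y be uniformly distributed on the unit sphere of ℝ^d and let z ≥ 0. Then |E[cos(√d·z·(y(1)+y(2)))] − e^{-z²} + e^{-z²}·z⁴/d| ≤ e^{z²}·z⁴·(z⁴ + 4z² + 2)/d², where y(1), y(2) denote the first two coordinates of y. -/

import Mathlib

open MeasureTheory ProbabilityTheory Real

lemma sum1 (x : ℝ) : HasSum (fun k : ℕ => x ^ k / k.factorial) (Real.exp x) := by
  have := NormedSpace.expSeries_div_hasSum_exp (𝔸 := ℝ) x
  rwa [← Real.exp_eq_exp_ℝ] at this

lemma sum2 (x : ℝ) : HasSum (fun k : ℕ => x ^ k / k.factorial * k) (x * Real.exp x) := by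
  rw [← hasSum_nat_add_iff' 1]
  convert! (sum1 x).mul_left x using 1
  · funext k
    rw [Nat.factorial_succ]
    have : (k.factorial : ℝ) ≠ 0 := by positivity
    push_cast
    field_simp
    ring
  · simp

lemma sum3 (x : ℝ) : HasSum (fun k : ℕ => x ^ k / k.factorial * (k * (k - 1))) (x ^ 2 * Real.exp x) := by
  rw [← hasSum_nat_add_iff' 2]
  simp only [Finset.sum_range_succ, Finset.sum_range_zero]
  convert! (sum1 x).mul_left (x^2) using 1
  · funext k
    rw [Nat.factorial_succ, Nat.factorial_succ]
    have : (k.factorial : ℝ) ≠ 0 := by positivity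
    push_cast
    field_simp
    ring
  · simp

lemma sum4 (x : ℝ) : HasSum (fun k : ℕ => x ^ k / k.factorial * (k * (k - 1)) ^ 2)
    (Real.exp x * x ^ 2 * (x ^ 2 + 4 * x + 2)) := by
  rw [← hasSum_nat_add_iff' 2]
  simp only [Finset.sum_range_succ, Finset.sum_range_zero]
  have h2 : HasSum (fun k : ℕ => x ^ k / k.factorial * k) (x * Real.exp x) := sum2 x
  convert! ((((sum3 x).add (h2.mul_left 4)).add ((sum1 x).mul_left 2))).mul_left (x^2) using 1
  · funext k
    rw [Nat.factorial_succ, Nat.factorial_succ]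
    have : (k.factorial : ℝ) ≠ 0 := by positivity
    push_cast
    field_simp
    ring
  · simp; ring

lemma refl_exists {d : ℕ} (i j : Fin d) (hij : i ≠ j) (θ : ℝ) :
    ∃ T : EuclideanSpace ℝ (Fin d) ≃ₗᵢ[ℝ] EuclideanSpace ℝ (Fin d), ∀ y,
      T y i = -(cos θ * y i + sin θ * y j) ∧ T y j = - sin θ * y i + cos θ * y j := by
  obtain ⟨a, rfl⟩ : ∃ a, θ = 2 * a := ⟨θ / 2, by ring⟩
  set w : EuclideanSpace ℝ (Fin d) :=
    cos a • EuclideanSpace.single i 1 + sin a • EuclideanSpace.single j 1 with hw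
  have hwi : w i = cos a := by simp [hw, hij]
  have hwj : w j = sin a := by simp [hw, hij.symm]
  have hin : ∀ y, inner ℝ w y = cos a * y i + sin a * y j := by
    intro y
    simp [hw, inner_add_left, inner_smul_left, EuclideanSpace.inner_single_left]
  have hn : ‖w‖ ^ 2 = 1 := by
    rw [← real_inner_self_eq_norm_sq, hin, hwi, hwj]; nlinarith [sin_sq_add_cos_sq a]
  refine ⟨(Submodule.span ℝ {w})ᗮ.reflection, fun y => ?_⟩
  rw [Submodule.reflection_orthogonal_apply, Submodule.reflection_singleton_apply]
  simp only [hin, RCLike.ofReal_real_eq_id, id, hn, PiLp.neg_apply, PiLp.sub_apply, PiLp.smul_apply, hwi, hwj, smul_eq_mul, two_smul, PiLp.add_apply]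
  rw [cos_two_mul, sin_two_mul]
  constructor
  · ring
  · linear_combination (-2 * y j)* (sin_sq_add_cos_sq a)

section
variable {d : ℕ} {μ : Measure (EuclideanSpace ℝ (Fin d))}

lemma coord_le (y : EuclideanSpace ℝ (Fin d)) (hy : ‖y‖ = 1) (i : Fin d) : |y i| ≤ 1 := by
  have := PiLp.norm_apply_le y i
  rwa [hy, Real.norm_eq_abs] at this

lemma integrable_bdd [IsProbabilityMeasure μ] (hsph : ∀ᵐ u ∂μ, ‖u‖ = 1)
    (f : EuclideanSpace ℝ (Fin d) → ℝ) (hf : Continuous f) : Integrable f μ := by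
  obtain ⟨C, hC⟩ := (isCompact_sphere (0 : EuclideanSpace ℝ (Fin d)) 1).exists_bound_of_continuousOn
    hf.continuousOn
  refine Integrable.of_bound hf.aestronglyMeasurable C ?_
  filter_upwards [hsph] with y hy
  exact hC y (by simpa using hy)

lemma rot_inv (hrot : ∀ T : EuclideanSpace ℝ (Fin d) ≃ₗᵢ[ℝ] EuclideanSpace ℝ (Fin d), μ.map T = μ)
    (i j : Fin d) (hij : i ≠ j) (θ : ℝ) (h : ℝ → ℝ → ℝ) (hh : Continuous (fun p : ℝ × ℝ => h p.1 p.2)) :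
    ∫ y, h (-(cos θ * y i + sin θ * y j)) (- sin θ * y i + cos θ * y j) ∂μ
      = ∫ y, h (y i) (y j) ∂μ := by
  obtain ⟨T, hT⟩ := refl_exists i j hij θ
  conv_rhs => rw [← hrot T]
  rw [integral_map]
  · simp only [hT]
  · exact T.continuous.aemeasurable
  · apply Continuous.aestronglyMeasurable
    exact hh.comp (f := fun y : EuclideanSpace ℝ (Fin d) => (y i, y j)) (by fun_prop)

lemma mixed [IsProbabilityMeasure μ] (hsph : ∀ᵐ u ∂μ, ‖u‖ = 1)
    (hrot : ∀ T : EuclideanSpace ℝ (Fin d) ≃ₗᵢ[ℝ] EuclideanSpace ℝ (Fin d), μ.map T = μ)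
    (i j : Fin d) (hij : i ≠ j) (k : ℕ) :
    (2 * k + 1) * ∫ y, y i ^ (2 * k) * y j ^ 2 ∂μ = ∫ y, y i ^ (2 * k + 2) ∂μ := by
  set F : ℝ → EuclideanSpace ℝ (Fin d) → ℝ := fun θ y =>
    (-(cos θ * y i + sin θ * y j)) ^ (2 * k + 1) * (- sin θ * y i + cos θ * y j) with hF
  set F' : ℝ → EuclideanSpace ℝ (Fin d) → ℝ := fun θ y =>
    -((2 * k + 1) * (cos θ * y i + sin θ * y j) ^ (2 * k) * (- sin θ * y i + cos θ * y j) ^ 2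
      - (cos θ * y i + sin θ * y j) ^ (2 * k + 2)) with hF'
  have hd1 : ∀ y θ, HasDerivAt (fun θ => F θ y) (F' θ y) θ := by
    intro y θ
    have h1 : HasDerivAt (fun θ => -(cos θ * y i + sin θ * y j))
        (-(- sin θ * y i + cos θ * y j)) θ :=
      (((hasDerivAt_cos θ).mul_const _).add ((hasDerivAt_sin θ).mul_const _)).neg
    have h2 : HasDerivAt (fun θ => (- sin θ * y i + cos θ * y j))
        (-cos θ * y i + -sin θ * y j) θ :=
      (((hasDerivAt_sin θ).neg.mul_const _).add ((hasDerivAt_cos θ).mul_const _))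
    refine ((h1.pow (2 * k + 1)).mul h2).congr_deriv ?_
    simp only [hF', Nat.add_sub_cancel, Pi.pow_apply]
    rw [Even.neg_pow (even_two_mul k), Odd.neg_pow (odd_two_mul_add_one k)]
    push_cast
    ring
  have key := (hasDerivAt_integral_of_dominated_loc_of_deriv_le (μ := μ) (F := F) (F' := F')
    (x₀ := 0) (s := Set.univ) (bound := fun _ => (2 * k + 1) * 2 ^ (2 * k) * 2 ^ 2 + 2 ^ (2 * k + 2))
    Filter.univ_mem
    (Filter.Eventually.of_forall fun θ => by
      apply Continuous.aestronglyMeasurable; simp only [hF]; fun_prop)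
    (integrable_bdd hsph _ (by simp only [hF]; fun_prop))
    (by apply Continuous.aestronglyMeasurable; simp only [hF']; fun_prop)
    (by
      filter_upwards [hsph] with y hy θ _
      have hi := coord_le y hy i
      have hj := coord_le y hy j
      have hc := abs_cos_le_one θ
      have hs := abs_sin_le_one θ
      have ha : |cos θ * y i + sin θ * y j| ≤ 2 := by
        refine (abs_add_le _ _).trans ?_
        rw [abs_mul, abs_mul]
        nlinarith [abs_nonneg (y i), abs_nonneg (y j), abs_nonneg (cos θ), abs_nonneg (sin θ)]
      have hb : |- sin θ * y i + cos θ * y j| ≤ 2 := by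
        refine (abs_add_le _ _).trans ?_
        rw [abs_mul, abs_mul, abs_neg]
        nlinarith [abs_nonneg (y i), abs_nonneg (y j), abs_nonneg (cos θ), abs_nonneg (sin θ)]
      simp only [hF', Real.norm_eq_abs]
      rw [abs_neg]
      refine (abs_sub _ _).trans ?_
      rw [abs_mul, abs_mul, abs_pow, abs_pow, abs_pow, abs_of_nonneg (by positivity : (0:ℝ) ≤ 2 * k + 1)]
      gcongr)
    (integrable_const _)
    (Filter.Eventually.of_forall fun y θ _ => hd1 y θ)).2
  have hconst : (fun θ => ∫ y, F θ y ∂μ) = fun _ => ∫ y, y i ^ (2 * k + 1) * y j ∂μ := by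
    funext θ
    exact rot_inv hrot i j hij θ (fun a b => a ^ (2 * k + 1) * b) (by fun_prop)
  rw [hconst] at key
  have h0 := key.unique (hasDerivAt_const _ _)
  simp only [hF', cos_zero, sin_zero, one_mul, zero_mul, add_zero, neg_zero, zero_add] at h0
  rw [integral_neg, integral_sub (integrable_bdd hsph _ (by fun_prop))
    (integrable_bdd hsph _ (by fun_prop))] at h0
  simp only [mul_assoc] at h0
  rw [integral_const_mul] at h0
  linarith

lemma moment [IsProbabilityMeasure μ] (hsph : ∀ᵐ u ∂μ, ‖u‖ = 1)
    (hrot : ∀ T : EuclideanSpace ℝ (Fin d) ≃ₗᵢ[ℝ] EuclideanSpace ℝ (Fin d), μ.map T = μ)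
    (i : Fin d) (k : ℕ) :
    (d + 2 * k) * ∫ y, y i ^ (2 * (k + 1)) ∂μ = (2 * k + 1) * ∫ y, y i ^ (2 * k) ∂μ := by
  have h1 : ∫ y, y i ^ (2 * k) ∂μ = ∑ j, ∫ y, y i ^ (2 * k) * y j ^ 2 ∂μ := by
    rw [← integral_finsetSum _ (fun j _ => integrable_bdd hsph _ (by fun_prop))]
    apply integral_congr_ae
    filter_upwards [hsph] with y hy
    rw [← Finset.mul_sum, ← EuclideanSpace.real_norm_sq_eq, hy]
    ring
  have h2 : ∀ j ∈ Finset.univ.erase i, (2 * k + 1) * ∫ y, y i ^ (2 * k) * y j ^ 2 ∂μ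
      = ∫ y, y i ^ (2 * k + 2) ∂μ := fun j hj =>
    mixed hsph hrot i j (Finset.ne_of_mem_erase hj).symm k
  rw [h1, ← Finset.add_sum_erase _ _ (Finset.mem_univ i), mul_add (2 * (k : ℝ) + 1), Finset.mul_sum,
    Finset.sum_congr rfl h2, Finset.sum_const, Finset.card_erase_of_mem (Finset.mem_univ i)]
  have : 1 ≤ d := i.pos
  simp only [Finset.card_univ, Fintype.card_fin, nsmul_eq_mul, ← pow_add, mul_add, mul_one]
  push_cast [this]
  ring

lemma cos_series [IsProbabilityMeasure μ] (hsph : ∀ᵐ u ∂μ, ‖u‖ = 1) (i : Fin d) (t : ℝ) :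
    HasSum (fun k : ℕ => (-1) ^ k * t ^ (2 * k) / (2 * k).factorial * ∫ y, y i ^ (2 * k) ∂μ)
      (∫ y, cos (t * y i) ∂μ) := by
  have h := hasSum_integral_of_dominated_convergence (μ := μ)
    (F := fun (k : ℕ) (y : EuclideanSpace ℝ (Fin d)) => (-1) ^ k * (t * y i) ^ (2 * k) / (2 * k).factorial)
    (f := fun y => cos (t * y i))
    (fun k _ => t ^ (2 * k) / (2 * k).factorial)
    (fun k => by apply Continuous.aestronglyMeasurable; fun_prop)
    (fun k => by
      filter_upwards [hsph] with y hy
      have hi := coord_le y hy i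
      rw [Real.norm_eq_abs, abs_div, abs_mul, abs_pow, abs_neg, abs_one, one_pow, one_mul, mul_pow,
        abs_mul, Nat.abs_cast, abs_of_nonneg ((even_two_mul k).pow_nonneg t), abs_pow]
      have := pow_le_one₀ (n := 2 * k) (abs_nonneg (y i)) hi
      have h0 := ((even_two_mul k).pow_nonneg t)
      gcongr
      nlinarith)
    (Filter.Eventually.of_forall fun y => (Real.hasSum_cosh t).summable)
    (integrable_const _)
    (Filter.Eventually.of_forall fun y => Real.hasSum_cos (t * y i))
  convert! h using 1
  funext k
  rw [← integral_const_mul]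
  congr 1
  funext y
  rw [mul_pow]
  ring
end

/-- The product of `d / (d + 2 j)` over `j < k`. -/
noncomputable def aCoef (d : ℝ) (k : ℕ) : ℝ := ∏ j ∈ Finset.range k, (d / (d + 2 * j))

lemma aCoef_bound (d : ℝ) (hd : 0 < d) (k : ℕ) :
    |aCoef d k - 1 + k * (k - 1) / d| ≤ (k * (k - 1)) ^ 2 / d ^ 2 := by
  have key : 0 < aCoef d k ∧ aCoef d k ≤ 1 ∧ 0 ≤ aCoef d k - 1 + k * (k - 1) / d ∧
      aCoef d k * (1 + k * (k - 1) / d) ≤ 1 ∧ (0:ℝ) ≤ k * (k - 1) / d := by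
    induction k with
    | zero => simp [aCoef]
    | succ k ih =>
      obtain ⟨h0, h1, h2, h3, h4⟩ := ih
      have hs : aCoef d (k + 1) * (1 + 2 * k / d) = aCoef d k := by
        rw [aCoef, Finset.prod_range_succ, ← aCoef]
        have : d + 2 * k ≠ 0 := by positivity
        field_simp
      set b := aCoef d (k + 1)
      set a := aCoef d k
      have e : ((k + 1 : ℕ) : ℝ) * ((k + 1 : ℕ) - 1) / d = k * (k - 1) / d + 2 * k / d := by
        push_cast; field_simp; ring
      rw [e]
      have hu : (0:ℝ) ≤ 2 * k / d := by positivity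
      set u := (2 * k / d : ℝ)
      set s := (k * (k - 1) / d : ℝ)
      have hb : 0 < b := by
        by_contra hb
        nlinarith
      refine ⟨hb, by nlinarith, by nlinarith [mul_nonneg hu (by nlinarith : 0 ≤ 1 - b)], ?_, by linarith⟩
      calc b * (1 + (s + u)) ≤ b * (1 + u) * (1 + s) := by
            nlinarith [mul_nonneg hb.le (mul_nonneg hu h4)]
        _ ≤ 1 := by rw [hs]; exact h3
  obtain ⟨h0, h1, h2, h3, h4⟩ := key
  rw [abs_of_nonneg h2, ← div_pow]
  set s := (k * (k - 1) / d : ℝ)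
  have : (aCoef d k - (1 - s + s ^ 2)) * (1 + s) ≤ 0 := by nlinarith [pow_nonneg h4 3]
  have := nonpos_of_mul_nonpos_left this (by linarith)
  linarith

theorem stmt_8 (d : ℕ) (hd : 2 ≤ d) (μ : Measure (EuclideanSpace ℝ (Fin d)))
    (hprob : IsProbabilityMeasure μ) (hsph : ∀ᵐ u ∂μ, ‖u‖ = 1)
    (hrot : ∀ T : EuclideanSpace ℝ (Fin d) ≃ₗᵢ[ℝ] EuclideanSpace ℝ (Fin d), μ.map T = μ)
    (z : ℝ) (hz : 0 ≤ z) :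
    |(∫ y, Real.cos (Real.sqrt d * z * (y (⟨0, by omega⟩ : Fin d) + y (⟨1, by omega⟩ : Fin d))) ∂μ)
        - Real.exp (-z ^ 2) + Real.exp (-z ^ 2) * z ^ 4 / d|
      ≤ Real.exp (z ^ 2) * z ^ 4 * (z ^ 4 + 4 * z ^ 2 + 2) / d ^ 2 := by
  have hd0 : (0:ℝ) < d := by positivity
  set i : Fin d := ⟨0, by omega⟩ with hi
  set j : Fin d := ⟨1, by omega⟩ with hj
  have hij : i ≠ j := by simp [hi, hj]
  set t : ℝ := √d * z * √2 with ht
  have hI : ∫ y, cos (√d * z * (y i + y j)) ∂μ = ∫ y, cos (t * y i) ∂μ := by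
    rw [← rot_inv hrot i j hij (π / 4) (fun a _ => cos (t * a)) (by fun_prop)]
    congr 1
    funext y
    rw [mul_neg, cos_neg, cos_pi_div_four, sin_pi_div_four, ht]
    congr 1
    have := Real.mul_self_sqrt (show (0:ℝ) ≤ 2 by norm_num)
    linear_combination (-(√d * z * (y i + y j)) / 2) * this
  rw [hI]
  have ht2 : t ^ 2 = 2 * d * z ^ 2 := by
    rw [ht, mul_pow, mul_pow, Real.sq_sqrt hd0.le, Real.sq_sqrt (by norm_num)]; ring
  have hM : ∀ k : ℕ, t ^ (2 * k) / (2 * k).factorial * ∫ y, y i ^ (2 * k) ∂μ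
      = (z ^ 2) ^ k / k.factorial * aCoef d k := by
    intro k
    induction k with
    | zero => simp [aCoef]
    | succ k ih =>
      have hm := moment hsph hrot i k
      have hp : (0:ℝ) < d + 2 * k := by positivity
      have hm' : ∫ y, y i ^ (2 * (k + 1)) ∂μ = (2 * k + 1) / (d + 2 * k) * ∫ y, y i ^ (2 * k) ∂μ := by
        field_simp; linarith
      rw [hm', aCoef, Finset.prod_range_succ, ← aCoef, show 2 * (k + 1) = 2 * k + 1 + 1 by ring,
        Nat.factorial_succ, Nat.factorial_succ, Nat.factorial_succ]
      have hk : ((2 * k).factorial : ℝ) ≠ 0 := by positivity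
      have hk' : (k.factorial : ℝ) ≠ 0 := by positivity
      trans (t ^ 2 / ((2 * k + 2) * (d + 2 * k))) *
        (t ^ (2 * k) / (2 * k).factorial * ∫ y, y i ^ (2 * k) ∂μ)
      · push_cast; field_simp; ring
      · rw [ih, ht2]; push_cast; field_simp; ring
  have hS := cos_series hsph i t
  have hS' : HasSum (fun k : ℕ => (-z ^ 2) ^ k / k.factorial * aCoef d k) (∫ y, cos (t * y i) ∂μ) := by
    convert! hS using 1
    funext k
    rw [mul_div_assoc, mul_assoc, hM, neg_pow]
    ring
  have hT := (hS'.sub (sum1 (-z ^ 2))).add ((sum3 (-z ^ 2)).div_const (d : ℝ))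
  have hU := (sum4 (z ^ 2)).div_const ((d : ℝ) ^ 2)
  have := hT.norm_le_of_bounded hU (fun k => by
    have hb := aCoef_bound d hd0 k
    have e : (-z ^ 2) ^ k / k.factorial * aCoef d k - (-z ^ 2) ^ k / k.factorial
        + (-z ^ 2) ^ k / k.factorial * (k * (k - 1)) / d
        = (-z ^ 2) ^ k / k.factorial * (aCoef d k - 1 + k * (k - 1) / d) := by ring
    rw [e, Real.norm_eq_abs, abs_mul, abs_div, abs_pow, abs_neg, abs_of_nonneg (sq_nonneg z),
      Nat.abs_cast]
    exact (mul_le_mul_of_nonneg_left hb (by positivity)).trans_eq (by ring))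
  rw [Real.norm_eq_abs] at this
  convert! this using 2
  · ring
  · ring
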